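/- arXiv:1004.3550 — 2 statements merged into one kernel-verified Lean document; each statement's English description precedes it below -/
import Mathlib

section
/- Let p ≥ 5 be a prime and let i be an integer with p ∤ i. Then ∑_{j=1}^{p−1} ∑_{k=1}^{p−1} c_{i,j,k}² = 2p² − 9p + 10. -/
/-!
Write `F = ZMod p`, `χ` for its quadratic character, and `a ≠ 0` for the class of `i`. Expanding,
`(1 + χ(β))² = 1 + 2 χ(β) + χ(β)²` with `χ(β)² = 1 - [β = 0]`, and as a polynomial in `k`,
`β = (k - (a + j))² - 4aj`.

For fixed `j ≠ 0`, the sum of `χ(β)` over all `k` is `-1` (`sum_quadraticChar_sq_sub`: the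
hyperbola `y² = x² - d` has `p - 1` points), and the number of `k` with `β = 0` is `1 + χ(4aj)`.
Removing `k = 0`, where `β = (a - j)²`, and summing over `j ≠ 0` gives
`∑ χ(β) = -2(p - 1) + 1` and `#{β = 0} = (p - 1) - 1`, so the total is
`2(p - 1)² + 2(3 - 2p) - (p - 2) = 2p² - 9p + 10`.
-/

open scoped BigOperators

/-- `β(i,j,k) = i² + j² + k² − 2ij − 2jk − 2ik`. -/
def β (i j k : ℤ) : ℤ := i ^ 2 + j ^ 2 + k ^ 2 - 2 * i * j - 2 * j * k - 2 * i * k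

section QuadraticChar

variable {F : Type*} [Field F] [Fintype F] [DecidableEq F]

lemma sum_ite_sq_eq (hF : ringChar F ≠ 2) (a : F) :
    ∑ y : F, (if y ^ 2 = a then (1 : ℤ) else 0) = quadraticChar F a + 1 := by
  rw [← quadraticChar_card_sqrts hF a, Finset.sum_boole]
  congr 2
  ext y
  simp

/-- The left side plus `|F|` counts the points of the hyperbola `y² = x² - d`; in the coordinates
`(x, u) = (x, x - y)` the equation is `2ux = u² + d`, with one `x` for every `u ≠ 0`. -/
lemma sum_quadraticChar_sq_sub (hF : ringChar F ≠ 2) {d : F} (hd : d ≠ 0) :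
    ∑ x : F, quadraticChar F (x ^ 2 - d) = -1 := by
  have h2 : (2 : F) ≠ 0 := Ring.two_ne_zero hF
  have key : ∑ x : F, (quadraticChar F (x ^ 2 - d) + 1) = (Fintype.card F : ℤ) - 1 := by
    calc ∑ x : F, (quadraticChar F (x ^ 2 - d) + 1)
        = ∑ x : F, ∑ u : F, (if 2 * u * x = u ^ 2 + d then (1 : ℤ) else 0) := by
          refine Finset.sum_congr rfl fun x _ => ?_
          rw [← sum_ite_sq_eq hF, ← Equiv.sum_comp (Equiv.subLeft x)]
          refine Finset.sum_congr rfl fun u _ => ?_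
          congr 1
          simp only [Equiv.subLeft_apply, eq_iff_iff]
          constructor <;> intro h <;> linear_combination -h
      _ = ∑ u : F, ∑ x : F, (if 2 * u * x = u ^ 2 + d then (1 : ℤ) else 0) :=
          Finset.sum_comm
      _ = ∑ u : F, (1 - if u = 0 then (1 : ℤ) else 0) := by
          refine Finset.sum_congr rfl fun u _ => ?_
          by_cases hu : u = 0
          · simp [hu, hd.symm]
          · have : ∀ x : F, (2 * u * x = u ^ 2 + d) ↔ x = (u ^ 2 + d) / (2 * u) := by
              intro x
              rw [eq_div_iff (mul_ne_zero h2 hu), mul_comm]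
            simp [this, hu]
      _ = (Fintype.card F : ℤ) - 1 := by simp
  rw [Finset.sum_add_distrib] at key
  simp only [Finset.sum_const, Finset.card_univ, nsmul_eq_mul, mul_one] at key
  linarith

/-- The inner sum over `k ≠ 0`; `χ(4aj)` comes from counting the zeros of `β` in `k`, and the
indicator of `j = a` from the omitted term `k = 0`. -/
lemma sum_sq_fixed_j (hF : ringChar F ≠ 2) {a j : F} (ha : a ≠ 0) (hj : j ≠ 0) :
    ∑ k ∈ Finset.univ.erase (0 : F),
        (1 + quadraticChar F ((k - (a + j)) ^ 2 - 4 * a * j)) ^ 2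
      = 2 * (Fintype.card F : ℤ) - 7 - quadraticChar F (4 * a * j)
        + 3 * (if j = a then 1 else 0) := by
  have h2 : (2 : F) ≠ 0 := Ring.two_ne_zero hF
  have hd : 4 * a * j ≠ 0 := by
    have : (4 : F) = 2 * 2 := by norm_num
    rw [this]
    exact mul_ne_zero (mul_ne_zero (mul_ne_zero h2 h2) ha) hj
  have hsq : ∀ t : F, (1 + quadraticChar F t) ^ 2
      = 2 + 2 * quadraticChar F t - (if t = 0 then 1 else 0) := by
    intro t
    by_cases ht : t = 0
    · simp [ht]
    · have := quadraticChar_sq_one ht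
      simp only [ht, if_false]
      linarith
  have hall : ∑ k : F, (1 + quadraticChar F ((k - (a + j)) ^ 2 - 4 * a * j)) ^ 2
      = 2 * (Fintype.card F : ℤ) - 2 - (quadraticChar F (4 * a * j) + 1) := by
    refine (Equiv.sum_comp (Equiv.subRight (a + j))
      (fun x => (1 + quadraticChar F (x ^ 2 - 4 * a * j)) ^ 2)).trans ?_
    simp only [hsq, Finset.sum_sub_distrib, Finset.sum_add_distrib, ← Finset.mul_sum,
      sum_quadraticChar_sq_sub hF hd, sub_eq_zero, sum_ite_sq_eq hF]
    simp
    ring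
  have hzero : (1 + quadraticChar F ((0 - (a + j)) ^ 2 - 4 * a * j)) ^ 2
      = 4 - 3 * (if j = a then 1 else 0) := by
    rw [show (0 - (a + j)) ^ 2 - 4 * a * j = (j - a) ^ 2 by ring]
    by_cases h : j = a
    · simp [h]
    · rw [quadraticChar_sq_one' (sub_ne_zero.mpr h)]
      simp [h]
  have := Finset.sum_erase_add Finset.univ
    (fun k : F => (1 + quadraticChar F ((k - (a + j)) ^ 2 - 4 * a * j)) ^ 2) (Finset.mem_univ 0)
  simp only [hzero, hall] at this
  linarith

lemma sum_sq_all (hF : ringChar F ≠ 2) {a : F} (ha : a ≠ 0) :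
    ∑ j ∈ Finset.univ.erase (0 : F), ∑ k ∈ Finset.univ.erase (0 : F),
        (1 + quadraticChar F ((k - (a + j)) ^ 2 - 4 * a * j)) ^ 2
      = 2 * (Fintype.card F : ℤ) ^ 2 - 9 * (Fintype.card F : ℤ) + 10 := by
  rw [Finset.sum_congr rfl fun j hj => sum_sq_fixed_j hF ha (Finset.ne_of_mem_erase hj)]
  have := Finset.sum_erase_add Finset.univ
    (fun j : F => 2 * (Fintype.card F : ℤ) - 7 - quadraticChar F (4 * a * j)
        + 3 * (if j = a then 1 else 0)) (Finset.mem_univ 0)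
  simp only [map_mul, Finset.sum_sub_distrib, Finset.sum_add_distrib, ← Finset.mul_sum,
    quadraticChar_sum_zero hF] at this ⊢
  simp [ha.symm, ha] at this ⊢
  linarith

end QuadraticChar

lemma sum_Icc_eq_sum_erase (p : ℕ) [Fact p.Prime] (f : ZMod p → ℤ) :
    ∑ j ∈ Finset.Icc (1 : ℤ) ((p : ℤ) - 1), f (j : ZMod p)
      = ∑ x ∈ Finset.univ.erase (0 : ZMod p), f x := by
  refine Finset.sum_nbij' (fun j => (j : ZMod p)) (fun x => (x.val : ℤ)) ?_ ?_ ?_ ?_ ?_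
  · intro j hj
    rw [Finset.mem_Icc] at hj
    simp only [Finset.mem_erase, Finset.mem_univ, and_true, ne_eq,
      ZMod.intCast_zmod_eq_zero_iff_dvd]
    intro h
    have := Int.le_of_dvd (by lia) h
    lia
  · intro x hx
    have h1 := ZMod.val_lt x
    have h2 : x.val ≠ 0 := by simpa [ZMod.val_eq_zero] using hx
    rw [Finset.mem_Icc]
    lia
  · intro j hj
    rw [Finset.mem_Icc] at hj
    simp only [ZMod.val_intCast]
    exact Int.emod_eq_of_lt (by lia) (by lia)
  · intro x _
    simp
  · intro j _
    rfl

/-- For a prime `p ≥ 5` and an integer `i` not divisible by `p`,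
`∑_{j=1}^{p−1} ∑_{k=1}^{p−1} c_{i,j,k}² = 2p² − 9p + 10`,
where `c_{i,j,k} = 1 + (β(i,j,k)/p)`. -/
theorem stmt6 (p : ℕ) [Fact p.Prime] (hp : 5 ≤ p) (i : ℤ) (hi : ¬ (p : ℤ) ∣ i) :
    (∑ j ∈ Finset.Icc (1 : ℤ) ((p : ℤ) - 1), ∑ k ∈ Finset.Icc (1 : ℤ) ((p : ℤ) - 1),
        (1 + legendreSym p (β i j k)) ^ 2)
      = 2 * (p : ℤ) ^ 2 - 9 * (p : ℤ) + 10 := by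
  have ha : (i : ZMod p) ≠ 0 := by rwa [ne_eq, ZMod.intCast_zmod_eq_zero_iff_dvd]
  have hF : ringChar (ZMod p) ≠ 2 := by
    rw [ZMod.ringChar_zmod_n]
    lia
  have h := sum_sq_all hF ha
  rw [ZMod.card] at h
  rw [← h, ← sum_Icc_eq_sum_erase p (fun j => ∑ k ∈ Finset.univ.erase (0 : ZMod p),
        (1 + quadraticChar (ZMod p) ((k - (i + j)) ^ 2 - 4 * i * j)) ^ 2)]
  refine Finset.sum_congr rfl fun j _ => ?_
  rw [← sum_Icc_eq_sum_erase p (fun k =>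
        (1 + quadraticChar (ZMod p) ((k - (i + j)) ^ 2 - 4 * i * j)) ^ 2)]
  refine Finset.sum_congr rfl fun k _ => ?_
  rw [legendreSym, β]
  push_cast
  ring_nf
end

section
/- Let p ≥ 5 be a prime and let j be an integer with p ∤ j. Then ∑_{u=0}^{p−1} K(u)²·K(ju)² equals 2p³ − 3p² − 3p if j ≡ 1 (mod p); equals p³ − 3p² − 3p if j ≢ 1 (mod p) and j is a quadratic residue modulo p; and equals p³ − p² − 3p if j is a quadratic nonresidue modulo p. The sum is over a complete set of residues u modulo p. -/
/-!
Write `ψ` for the standard additive character of `ZMod p`. Expanding the four Kloosterman sums over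
units, rescaling three of the variables by the fourth one `t`, and replacing `u` by `t u`, the
moment becomes the sum over units `x, y, z` of `(∑_t ψ (t A)) * (∑_u ψ (u B))`, where
`A = x + y + z + 1` and `B = x⁻¹ + y⁻¹ + j z⁻¹ + j`. Orthogonality turns this into
`p² n₀ - p n` (`moment_eq`, `moment_eq_count`), where `n` counts the triples with `B = 0` and `n₀` those with
`A = B = 0`.

The count `n = p² - 3p + 3` is elementary (`sum_B`). For `n₀` (`sum_AB`): given `A = 0`, the equation
`B = 0` means `(z + 1) (z - j x y) = 0`, so inclusion-exclusion leaves three counts. The locus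
`z = -1` contributes `p - 1`; the locus `z = j x y` is the curve `x + y + j x y + 1 = 0`, which
degenerates exactly when `j = 1` (`sum_curve_one`, `sum_curve_ne_one`); and their intersection is
`j x² = 1`, which is where the quadratic character of `j` enters.
-/

open scoped BigOperators

/-- The classical Kloosterman sum `K(u) = ∑_{x ∈ (ℤ/pℤ)ˣ} exp(2πi(x + u·x⁻¹)/p)`. -/
noncomputable def K (p : ℕ) [Fact p.Prime] (u : ZMod p) : ℂ :=
  ∑ x : (ZMod p)ˣ,
    Complex.exp (2 * Real.pi * Complex.I *
      ((((x : ZMod p) + u * ((x⁻¹ : (ZMod p)ˣ) : ZMod p)).val : ℕ) : ℂ) / p)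

variable {p : ℕ} [Fact p.Prime]

lemma K_eq_stdAddChar (u : ZMod p) :
    K p u = ∑ x : (ZMod p)ˣ, ZMod.stdAddChar ((x : ZMod p) + u * ((x⁻¹ : (ZMod p)ˣ) : ZMod p)) := by
  unfold K
  refine Finset.sum_congr rfl fun x _ => ?_
  generalize (x : ZMod p) + u * ((x⁻¹ : (ZMod p)ˣ) : ZMod p) = a
  have h := ZMod.stdAddChar_coe (N := p) (a.val : ℤ)
  rw [Int.cast_natCast, ZMod.natCast_zmod_val] at h
  rw [h]
  push_cast
  rfl

/-- The summation variable may be rescaled by an arbitrary unit `t`. -/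
lemma K_eq_rescaled (t : (ZMod p)ˣ) (u : ZMod p) :
    K p u = ∑ x : (ZMod p)ˣ, ZMod.stdAddChar
      ((t : ZMod p) * (x : ZMod p) + u * (((t⁻¹ : (ZMod p)ˣ) : ZMod p) * ((x⁻¹ : (ZMod p)ˣ) : ZMod p))) := by
  rw [K_eq_stdAddChar, ← Equiv.sum_comp (Equiv.mulLeft t)]
  refine Finset.sum_congr rfl fun x _ => ?_
  simp only [Equiv.coe_mulLeft, mul_inv, Units.val_mul]

lemma sum_stdAddChar_mul (b : ZMod p) :
    ∑ u : ZMod p, (ZMod.stdAddChar (u * b) : ℂ) = if b = 0 then (p : ℂ) else 0 := by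
  have h := AddChar.sum_mulShift b (ZMod.isPrimitive_stdAddChar p)
  rw [h]
  simp [ZMod.card]

lemma sum_units_eq (f : ZMod p → ℂ) :
    ∑ t : (ZMod p)ˣ, f t = ∑ t : ZMod p, f t - f 0 := by
  rw [eq_sub_iff_add_eq, ← Finset.sum_erase_add _ _ (Finset.mem_univ (0 : ZMod p))]
  congr 1
  refine Finset.sum_bij (fun t _ => (t : ZMod p)) (by simp) (fun a _ b _ h => Units.ext h)
    (fun b hb => ?_) (fun _ _ => rfl)
  have hb0 : b ≠ 0 := by simpa using hb
  exact ⟨Units.mk0 b hb0, by simp, rfl⟩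

lemma sum_units_stdAddChar_mul (a : ZMod p) :
    ∑ t : (ZMod p)ˣ, (ZMod.stdAddChar ((t : ZMod p) * a) : ℂ)
      = (if a = 0 then (p : ℂ) else 0) - 1 := by
  rw [sum_units_eq (fun t => ZMod.stdAddChar (t * a)), sum_stdAddChar_mul]
  simp

lemma card_units_cast : (Fintype.card (ZMod p)ˣ : ℂ) = p - 1 := by
  rw [ZMod.card_units, Nat.cast_sub (Fact.out (p := p.Prime)).one_le, Nat.cast_one]

/-- Orthogonality of `ψ`, after rescaling `x, y, z` by the fourth unit `t` and `u` by `t`. -/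
lemma moment_eq (j : ZMod p) :
    ∑ u : ZMod p, (K p u) ^ 2 * (K p (j * u)) ^ 2 =
      ∑ x : (ZMod p)ˣ, ∑ y : (ZMod p)ˣ, ∑ z : (ZMod p)ˣ,
        ((if (x : ZMod p) + y + z + 1 = 0 then (p : ℂ) else 0) - 1) *
        (if ((x⁻¹ : (ZMod p)ˣ) : ZMod p) + (y⁻¹ : (ZMod p)ˣ) + j * (z⁻¹ : (ZMod p)ˣ) + j = 0
          then (p : ℂ) else 0) := by
  have expand : ∀ u : ZMod p, (K p u) ^ 2 * (K p (j * u)) ^ 2 =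
      ∑ t : (ZMod p)ˣ, ∑ x : (ZMod p)ˣ, ∑ y : (ZMod p)ˣ, ∑ z : (ZMod p)ˣ,
        (ZMod.stdAddChar ((t : ZMod p) * ((x : ZMod p) + (y : ZMod p) + (z : ZMod p) + 1)) : ℂ) *
        ZMod.stdAddChar (u * ((t⁻¹ : (ZMod p)ˣ) : ZMod p) *
          (((x⁻¹ : (ZMod p)ˣ) : ZMod p) + ((y⁻¹ : (ZMod p)ˣ) : ZMod p)
            + j * ((z⁻¹ : (ZMod p)ˣ) : ZMod p) + j)) := by
    intro u
    have h : (K p u) ^ 2 * (K p (j * u)) ^ 2 = K p (j * u) * (K p (j * u) * (K p u * K p u)) := by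
      ring
    rw [h]
    nth_rewrite 1 [K_eq_stdAddChar]
    rw [Finset.sum_mul]
    refine Finset.sum_congr rfl fun t _ => ?_
    rw [K_eq_rescaled t u, K_eq_rescaled t (j * u)]
    simp only [Finset.sum_mul, Finset.mul_sum]
    refine Finset.sum_congr rfl fun x _ => Finset.sum_congr rfl fun y _ =>
      Finset.sum_congr rfl fun z _ => ?_
    simp only [← AddChar.map_add_eq_mul]
    congr 1
    ring
  have inner : ∀ t x y z : (ZMod p)ˣ, ∑ u : ZMod p,
        (ZMod.stdAddChar ((t : ZMod p) * ((x : ZMod p) + (y : ZMod p) + (z : ZMod p) + 1)) : ℂ) *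
        ZMod.stdAddChar (u * ((t⁻¹ : (ZMod p)ˣ) : ZMod p) *
          (((x⁻¹ : (ZMod p)ˣ) : ZMod p) + ((y⁻¹ : (ZMod p)ˣ) : ZMod p)
            + j * ((z⁻¹ : (ZMod p)ˣ) : ZMod p) + j)) =
      (ZMod.stdAddChar ((t : ZMod p) * ((x : ZMod p) + (y : ZMod p) + (z : ZMod p) + 1)) : ℂ) *
        (if ((x⁻¹ : (ZMod p)ˣ) : ZMod p) + (y⁻¹ : (ZMod p)ˣ) + j * (z⁻¹ : (ZMod p)ˣ) + j = 0
          then (p : ℂ) else 0) := by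
    intro t x y z
    simp only [mul_assoc]
    rw [← Finset.mul_sum, sum_stdAddChar_mul]
    simp only [Units.mul_right_eq_zero]
  simp only [expand]
  rw [Finset.sum_comm]
  simp only [Finset.sum_comm (s := (Finset.univ : Finset (ZMod p))), inner]
  rw [Finset.sum_comm]
  refine Finset.sum_congr rfl fun x _ => ?_
  rw [Finset.sum_comm]
  refine Finset.sum_congr rfl fun y _ => ?_
  rw [Finset.sum_comm]
  refine Finset.sum_congr rfl fun z _ => ?_
  rw [← Finset.sum_mul, sum_units_stdAddChar_mul]

lemma sum_linear_inv (a : (ZMod p)ˣ) (c : ZMod p) :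
    ∑ z : (ZMod p)ˣ, (if c + a * ((z⁻¹ : (ZMod p)ˣ) : ZMod p) = 0 then (1 : ℂ) else 0)
      = if c = 0 then 0 else 1 := by
  split_ifs with hc
  · refine Finset.sum_eq_zero fun z _ => if_neg ?_
    rw [hc, zero_add]
    exact (a * z⁻¹).ne_zero
  · have h : ∀ z : (ZMod p)ˣ, c + a * ((z⁻¹ : (ZMod p)ˣ) : ZMod p) = 0 ↔
        z = -a * (Units.mk0 c hc)⁻¹ := by
      intro z
      rw [eq_mul_inv_iff_mul_eq, Units.ext_iff]
      have hz : (z : ZMod p) * ((z⁻¹ : (ZMod p)ˣ) : ZMod p) = 1 := z.mul_inv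
      simp only [Units.val_mul, Units.val_mk0, Units.val_neg]
      constructor
      · intro e
        linear_combination (z : ZMod p) * e - (a : ZMod p) * hz
      · intro e
        linear_combination ((z⁻¹ : (ZMod p)ˣ) : ZMod p) * e - c * hz
    simp only [h, Finset.sum_ite_eq', Finset.mem_univ, if_true]

lemma sum_B (j : (ZMod p)ˣ) :
    ∑ x : (ZMod p)ˣ, ∑ y : (ZMod p)ˣ, ∑ z : (ZMod p)ˣ,
      (if ((x⁻¹ : (ZMod p)ˣ) : ZMod p) + (y⁻¹ : (ZMod p)ˣ) + j * (z⁻¹ : (ZMod p)ˣ) + j = 0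
          then (1 : ℂ) else 0) = (p : ℂ) ^ 2 - 3 * p + 3 := by
  have flip : ∀ c : ZMod p, (if c = 0 then (0 : ℂ) else 1) = 1 - if c = 0 then 1 else 0 := by
    intro c; split_ifs <;> simp
  have hz : ∀ x y : (ZMod p)ˣ, ∑ z : (ZMod p)ˣ,
      (if ((x⁻¹ : (ZMod p)ˣ) : ZMod p) + (y⁻¹ : (ZMod p)ˣ) + j * (z⁻¹ : (ZMod p)ˣ) + j = 0
          then (1 : ℂ) else 0) =
      1 - if (((x⁻¹ : (ZMod p)ˣ) : ZMod p) + j) + (1 : (ZMod p)ˣ) * (y⁻¹ : (ZMod p)ˣ) = 0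
        then 1 else 0 := by
    intro x y
    rw [← flip, ← sum_linear_inv j]
    refine Finset.sum_congr rfl fun z _ => ?_
    congr 2
    push_cast
    ring
  have hy : ∀ x : (ZMod p)ˣ, (if ((x⁻¹ : (ZMod p)ˣ) : ZMod p) + j = 0 then (0 : ℂ) else 1) =
      1 - if (j : ZMod p) + (1 : (ZMod p)ˣ) * ((x⁻¹ : (ZMod p)ˣ) : ZMod p) = 0 then 1 else 0 := by
    intro x
    rw [flip, Units.val_one, one_mul, add_comm]
  simp only [hz, Finset.sum_sub_distrib, sum_linear_inv, hy]
  simp only [Finset.sum_const, Finset.card_univ, nsmul_eq_mul, card_units_cast, j.ne_zero, if_false]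
  ring

/-- Eliminating `z = j x y`, which is automatically a unit, reduces the count to a plane curve. -/
lemma sum_curve (j : (ZMod p)ˣ) :
    ∑ x : (ZMod p)ˣ, ∑ y : (ZMod p)ˣ, ∑ z : (ZMod p)ˣ,
      (if (x : ZMod p) + y + z + 1 = 0 ∧ (z : ZMod p) = j * x * y then (1 : ℂ) else 0)
    = ∑ x : (ZMod p)ˣ, ∑ y : (ZMod p)ˣ,
      (if ((x : ZMod p) + 1) + (j * x + 1) * y = 0 then (1 : ℂ) else 0) := by
  refine Finset.sum_congr rfl fun x _ => Finset.sum_congr rfl fun y _ => ?_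
  have h : ∀ z : (ZMod p)ˣ, ((x : ZMod p) + y + z + 1 = 0 ∧ (z : ZMod p) = j * x * y) ↔
      (z = j * x * y ∧ ((x : ZMod p) + 1) + (j * x + 1) * y = 0) := by
    intro z
    rw [Units.ext_iff]
    push_cast
    constructor
    · rintro ⟨h1, h2⟩
      exact ⟨h2, by linear_combination h1 - h2⟩
    · rintro ⟨h1, h2⟩
      exact ⟨by linear_combination h2 + h1, h1⟩
  simp only [h, ite_and, Finset.sum_ite_eq', Finset.mem_univ, if_true]

/-- The number of units `y` with `a + b y = 0`. -/
lemma sum_linear (a b : ZMod p) :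
    ∑ y : (ZMod p)ˣ, (if a + b * y = 0 then (1 : ℂ) else 0)
      = if b = 0 then (if a = 0 then (p : ℂ) - 1 else 0) else (if a = 0 then 0 else 1) := by
  by_cases hb : b = 0
  · by_cases ha : a = 0
    · simp only [hb, ha, zero_mul, add_zero, if_true, Finset.sum_const, Finset.card_univ,
        nsmul_eq_mul, card_units_cast, mul_one]
    · simp [hb, ha]
  · rw [if_neg hb, ← sum_linear_inv (Units.mk0 b hb) a, ← Equiv.sum_comp (Equiv.inv _)]
    rfl

lemma sum_curve_one :
    ∑ x : (ZMod p)ˣ, ∑ y : (ZMod p)ˣ,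
      (if ((x : ZMod p) + 1) + (((1 : (ZMod p)ˣ) : ZMod p) * x + 1) * y = 0 then (1 : ℂ) else 0)
      = 2 * p - 3 := by
  simp only [sum_linear]
  have h : ∀ x : (ZMod p)ˣ, (if ((1 : (ZMod p)ˣ) : ZMod p) * x + 1 = 0 then
        (if (x : ZMod p) + 1 = 0 then (p : ℂ) - 1 else 0)
        else (if (x : ZMod p) + 1 = 0 then 0 else 1))
      = 1 + if x = -1 then (p : ℂ) - 2 else 0 := by
    intro x
    have e : (x : ZMod p) + 1 = 0 ↔ x = -1 := by
      rw [Units.ext_iff, Units.val_neg, Units.val_one, add_eq_zero_iff_eq_neg]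
    rw [Units.val_one, one_mul]
    simp only [e]
    split_ifs
    · ring
    · ring
  simp only [h, Finset.sum_add_distrib, Finset.sum_ite_eq', Finset.mem_univ, if_true,
    Finset.sum_const, Finset.card_univ, nsmul_eq_mul, card_units_cast]
  ring

lemma sum_curve_ne_one (j : (ZMod p)ˣ) (hj : j ≠ 1) :
    ∑ x : (ZMod p)ˣ, ∑ y : (ZMod p)ˣ,
      (if ((x : ZMod p) + 1) + (j * x + 1) * y = 0 then (1 : ℂ) else 0) = p - 3 := by
  simp only [sum_linear]
  have hne : -j⁻¹ ≠ (-1 : (ZMod p)ˣ) := by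
    intro h
    exact hj (inv_eq_one.mp (neg_injective h))
  have h : ∀ x : (ZMod p)ˣ, (if (j : ZMod p) * x + 1 = 0 then
        (if (x : ZMod p) + 1 = 0 then (p : ℂ) - 1 else 0)
        else (if (x : ZMod p) + 1 = 0 then 0 else 1))
      = 1 - (if x = -1 then 1 else 0) - (if x = -j⁻¹ then 1 else 0) := by
    intro x
    have e : (x : ZMod p) + 1 = 0 ↔ x = -1 := by
      rw [Units.ext_iff, Units.val_neg, Units.val_one, add_eq_zero_iff_eq_neg]
    have e' : (j : ZMod p) * x + 1 = 0 ↔ x = -j⁻¹ := by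
      rw [← mul_right_inj j, mul_neg, mul_inv_cancel, Units.ext_iff, Units.val_neg, Units.val_mul,
        Units.val_one, add_eq_zero_iff_eq_neg]
    simp only [e, e']
    by_cases h1 : x = -1
    · simp [h1, hne.symm]
    · simp only [h1, if_false]
      split_ifs <;> ring
  simp only [h, Finset.sum_sub_distrib, Finset.sum_ite_eq', Finset.mem_univ, if_true,
    Finset.sum_const, Finset.card_univ, nsmul_eq_mul, card_units_cast]
  ring

/-- Inclusion-exclusion for the system `A = B = 0`, which is the union of the loci `z = j x y` and
`z = -1` inside `A = 0`. -/
lemma sum_AB (j : (ZMod p)ˣ) :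
    ∑ x : (ZMod p)ˣ, ∑ y : (ZMod p)ˣ, ∑ z : (ZMod p)ˣ,
      (if (x : ZMod p) + y + z + 1 = 0 ∧
        ((x⁻¹ : (ZMod p)ˣ) : ZMod p) + (y⁻¹ : (ZMod p)ˣ) + j * (z⁻¹ : (ZMod p)ˣ) + j = 0
          then (1 : ℂ) else 0)
    = ∑ x : (ZMod p)ˣ, ∑ y : (ZMod p)ˣ,
        (if ((x : ZMod p) + 1) + (j * x + 1) * y = 0 then (1 : ℂ) else 0)
      + ((p : ℂ) - 1) - ∑ x : (ZMod p)ˣ, (if j * x ^ 2 = 1 then (1 : ℂ) else 0) := by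
  have key : ∀ x y z : (ZMod p)ˣ,
      (if (x : ZMod p) + y + z + 1 = 0 ∧
        ((x⁻¹ : (ZMod p)ˣ) : ZMod p) + (y⁻¹ : (ZMod p)ˣ) + j * (z⁻¹ : (ZMod p)ˣ) + j = 0
          then (1 : ℂ) else 0)
      = (if (x : ZMod p) + y + z + 1 = 0 ∧ (z : ZMod p) = j * x * y then (1 : ℂ) else 0)
        + (if z = -1 then (if y = -x then 1 else 0) else 0)
        - (if z = -1 then (if y = -x then (if j * x ^ 2 = 1 then 1 else 0) else 0) else 0) := by
    intro x y z
    have hx : (x : ZMod p) * ((x⁻¹ : (ZMod p)ˣ) : ZMod p) = 1 := x.mul_inv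
    have hy : (y : ZMod p) * ((y⁻¹ : (ZMod p)ˣ) : ZMod p) = 1 := y.mul_inv
    have hz : (z : ZMod p) * ((z⁻¹ : (ZMod p)ˣ) : ZMod p) = 1 := z.mul_inv
    have hxyz : (x : ZMod p) * y * z ≠ 0 := by simp
    -- clearing denominators in `B`
    have hB : ((x⁻¹ : (ZMod p)ˣ) : ZMod p) + (y⁻¹ : (ZMod p)ˣ) + j * (z⁻¹ : (ZMod p)ˣ) + j = 0 ↔
        (y : ZMod p) * z + x * z + j * x * y + j * x * y * z = 0 := by
      rw [← mul_right_inj' hxyz, mul_zero]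
      refine Eq.congr_left ?_
      linear_combination (y : ZMod p) * z * hx + (x : ZMod p) * z * hy + (j : ZMod p) * x * y * hz
    simp only [hB]
    by_cases h1 : z = -1
    · subst h1
      by_cases h2 : y = -x
      · subst h2
        have h3 : (-1 : ZMod p) = j * x * -x ↔ j * x ^ 2 = 1 := by
          rw [Units.ext_iff]
          push_cast
          constructor <;> intro h <;> linear_combination h
        simp only [Units.val_neg, Units.val_one, if_true, h3]
        rw [if_pos ⟨by ring, by ring⟩]
        have : (x : ZMod p) + -x + -1 + 1 = 0 := by ring
        simp only [this, true_and]
        ring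
      · have h3 : ¬ ((x : ZMod p) + y + ((-1 : (ZMod p)ˣ) : ZMod p) + 1 = 0) := by
          intro h
          apply h2
          rw [Units.ext_iff]
          push_cast at h ⊢
          linear_combination h
        simp only [h2, h3, false_and, if_true, if_false, add_zero, sub_zero]
    · have hz1 : (z : ZMod p) + 1 ≠ 0 := by
        intro h
        apply h1
        rw [Units.ext_iff]
        push_cast
        linear_combination h
      simp only [h1, if_false, add_zero, sub_zero]
      congr 1
      refine propext (and_congr_right fun hA => ?_)
      constructor
      · intro h
        -- on `A = 0` the cleared form of `B` factors as `(z + 1) (j x y - z)`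
        refine (sub_eq_zero.mp ((mul_eq_zero.mp ?_).resolve_left hz1))
        linear_combination (z : ZMod p) * hA - h
      · intro h
        linear_combination (z : ZMod p) * hA - ((z : ZMod p) + 1) * h
  simp only [key, Finset.sum_sub_distrib, Finset.sum_add_distrib, sum_curve, Finset.sum_ite_eq',
    Finset.mem_univ, if_true, Finset.sum_const, Finset.card_univ, nsmul_eq_mul, card_units_cast,
    mul_one]

lemma moment_eq_count (j : (ZMod p)ˣ) :
    ∑ u : ZMod p, (K p u) ^ 2 * (K p (j * u)) ^ 2 =
      (p : ℂ) ^ 2 * (∑ x : (ZMod p)ˣ, ∑ y : (ZMod p)ˣ,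
        (if ((x : ZMod p) + 1) + (j * x + 1) * y = 0 then (1 : ℂ) else 0)
      + ((p : ℂ) - 1) - ∑ x : (ZMod p)ˣ, (if j * x ^ 2 = 1 then (1 : ℂ) else 0))
      - p * ((p : ℂ) ^ 2 - 3 * p + 3) := by
  rw [moment_eq, ← sum_AB, ← sum_B j]
  simp only [Finset.mul_sum, ← Finset.sum_sub_distrib]
  refine Finset.sum_congr rfl fun x _ => Finset.sum_congr rfl fun y _ =>
      Finset.sum_congr rfl fun z _ => ?_
  rw [ite_and]
  split_ifs <;> ring

lemma sum_sq_of_isSquare (hp : 5 ≤ p) (j : (ZMod p)ˣ) (hj : IsSquare (j : ZMod p)) :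
    ∑ x : (ZMod p)ˣ, (if j * x ^ 2 = 1 then (1 : ℂ) else 0) = 2 := by
  obtain ⟨r, hr⟩ := hj
  have hr0 : r ≠ 0 := by
    rintro rfl
    exact j.ne_zero (by simp at hr)
  obtain ⟨s, rfl⟩ : ∃ s : (ZMod p)ˣ, (s : ZMod p) = r := ⟨Units.mk0 r hr0, rfl⟩
  obtain rfl : j = s * s := Units.ext (by simpa using hr)
  have : Fact (2 < p) := ⟨by omega⟩
  have hne : s⁻¹ ≠ -s⁻¹ := by
    intro h
    have h' := congrArg (fun t : (ZMod p)ˣ => ((t * s : (ZMod p)ˣ) : ZMod p)) h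
    simp only [neg_mul, inv_mul_cancel, Units.val_neg, Units.val_one] at h'
    exact ZMod.neg_one_ne_one h'.symm
  have h : ∀ x : (ZMod p)ˣ, (if s * s * x ^ 2 = 1 then (1 : ℂ) else 0) =
      (if x = s⁻¹ then 1 else 0) + (if x = -s⁻¹ then 1 else 0) := by
    intro x
    have e : s * s * x ^ 2 = 1 ↔ x = s⁻¹ ∨ x = -s⁻¹ := by
      rw [← mul_right_inj s (b := x), ← mul_right_inj s (b := x) (c := -s⁻¹), mul_neg,
        mul_inv_cancel]
      have : s * s * x ^ 2 = (s * x) ^ 2 := by rw [mul_pow, sq s]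
      rw [this, Units.ext_iff, Units.ext_iff, Units.ext_iff]
      push_cast
      exact sq_eq_one_iff
    simp only [e]
    by_cases h1 : x = s⁻¹
    · simp [h1, hne]
    · simp [h1]
  simp only [h, Finset.sum_add_distrib, Finset.sum_ite_eq', Finset.mem_univ, if_true]
  norm_num

lemma sum_sq_of_not_isSquare (j : (ZMod p)ˣ) (hj : ¬ IsSquare (j : ZMod p)) :
    ∑ x : (ZMod p)ˣ, (if j * x ^ 2 = 1 then (1 : ℂ) else 0) = 0 := by
  refine Finset.sum_eq_zero fun x _ => if_neg fun h => hj ?_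
  refine ⟨((x⁻¹ : (ZMod p)ˣ) : ZMod p), ?_⟩
  rw [← Units.val_mul, ← mul_inv, ← sq, ← eq_inv_of_mul_eq_one_left h]

/-- For a prime `p ≥ 5` and an integer `j` not divisible by `p`,
`∑_{u=0}^{p−1} K(u)²·K(ju)²` equals `2p³ − 3p² − 3p` if `j ≡ 1 (mod p)`;
`p³ − 3p² − 3p` if `j ≢ 1 (mod p)` and `j` is a quadratic residue mod `p`;
and `p³ − p² − 3p` if `j` is a quadratic nonresidue mod `p`. -/
theorem stmt13 (p : ℕ) [Fact p.Prime] (hp : 5 ≤ p) (j : ℤ) (hj : ¬ (p : ℤ) ∣ j) :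
    ((j : ZMod p) = 1 →
      ∑ u : ZMod p, (K p u) ^ 2 * (K p ((j : ZMod p) * u)) ^ 2
        = 2 * (p : ℂ) ^ 3 - 3 * (p : ℂ) ^ 2 - 3 * (p : ℂ)) ∧
    ((j : ZMod p) ≠ 1 → IsSquare ((j : ZMod p)) →
      ∑ u : ZMod p, (K p u) ^ 2 * (K p ((j : ZMod p) * u)) ^ 2
        = (p : ℂ) ^ 3 - 3 * (p : ℂ) ^ 2 - 3 * (p : ℂ)) ∧
    (¬ IsSquare ((j : ZMod p)) →
      ∑ u : ZMod p, (K p u) ^ 2 * (K p ((j : ZMod p) * u)) ^ 2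
        = (p : ℂ) ^ 3 - (p : ℂ) ^ 2 - 3 * (p : ℂ)) := by
  have hj0 : (j : ZMod p) ≠ 0 := by
    rwa [Ne, ZMod.intCast_zmod_eq_zero_iff_dvd]
  obtain ⟨J, hJ⟩ : ∃ J : (ZMod p)ˣ, (J : ZMod p) = j := ⟨Units.mk0 _ hj0, rfl⟩
  rw [← hJ]
  refine ⟨fun h1 => ?_, fun h1 hs => ?_, fun hs => ?_⟩
  · obtain rfl : J = 1 := Units.ext h1
    rw [moment_eq_count, sum_curve_one, sum_sq_of_isSquare hp 1 (by simp)]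
    ring
  · have hne : J ≠ 1 := fun h => h1 (by simp [h])
    rw [moment_eq_count, sum_curve_ne_one J hne, sum_sq_of_isSquare hp J hs]
    ring
  · have hne : J ≠ 1 := fun h => hs (by simp [h])
    rw [moment_eq_count, sum_curve_ne_one J hne, sum_sq_of_not_isSquare J hs]
    ring
end
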